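/- arXiv:1802.02327 — 3 statements merged into one kernel-verified Lean document; each statement's English description precedes it below -/
import Mathlib

section
/- Let 0 < μ < 1 and let u : ℝ → ℝ be smooth with compact support. Then ∫_ℝ u(x) · (I₋^μ u)(x) dx = cos(μπ/2) · ∫_ℝ |2πξ|^{−μ} |û(ξ)|² dξ, where û is the Fourier transform of u; in particular this quantity is nonnegative. -/
open MeasureTheory Real Set FourierTransform

/-- Left Riemann–Liouville fractional integral of order `μ` on the whole real line:
`(I₋^μ u)(x) = (1/Γ(μ)) ∫_{-∞}^x (x−s)^{μ−1} u(s) ds`. -/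
noncomputable def leftRLIntegral (μ : ℝ) (u : ℝ → ℝ) (x : ℝ) : ℝ :=
  (1 / Real.Gamma μ) * ∫ s in Set.Iio x, (x - s) ^ (μ - 1) * u s

theorem integrableOn_rpow_mul_exp_neg_mul {a b : ℝ} (ha : 0 < a) (hb : 0 < b) :
    IntegrableOn (fun t : ℝ => t ^ (a - 1) * Real.exp (-(b * t))) (Ioi 0) := by
  have h := integrableOn_rpow_mul_exp_neg_mul_rpow (s := a - 1) (p := 1) (by linarith) one_pos hb
  simpa using h

/-- The Euler integral with a complex decay rate. -/
theorem integral_rpow_mul_cexp_neg_mul_Ioi {a : ℝ} (ha : 0 < a) {r : ℂ} (hr : 0 < r.re) :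
    ∫ t in Ioi (0 : ℝ), ((t ^ (a - 1) : ℝ) : ℂ) * Complex.exp (-(r * t)) =
      (1 / r) ^ (a : ℂ) * Real.Gamma a := by
  set w : ℝ → NNReal := fun t => (t ^ (a - 1)).toNNReal
  have hw : Measurable w := by fun_prop
  set ν := (volume.restrict (Ioi (0 : ℝ))).withDensity (fun t => w t)
  set X : ℝ → ℝ := fun t => -t
  have hF : ∀ z : ℂ, ProbabilityTheory.complexMGF X ν z =
      ∫ t in Ioi (0 : ℝ), ((t ^ (a - 1) : ℝ) : ℂ) * Complex.exp (-(z * t)) := by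
    intro z
    rw [ProbabilityTheory.complexMGF, integral_withDensity_eq_integral_smul hw]
    refine setIntegral_congr_fun measurableSet_Ioi fun t ht => ?_
    have : 0 ≤ t ^ (a - 1) := rpow_nonneg (le_of_lt ht) _
    simp [w, X, NNReal.smul_def, this]
  have hset : Ioi 0 ⊆ interior (ProbabilityTheory.integrableExpSet X ν) := by
    refine interior_maximal (fun b hb => ?_) isOpen_Ioi
    change Integrable _ _
    rw [integrable_withDensity_iff_integrable_smul hw]
    refine (integrableOn_congr_fun (fun t ht => ?_) measurableSet_Ioi).1
      (integrableOn_rpow_mul_exp_neg_mul ha hb)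
    have : 0 ≤ t ^ (a - 1) := rpow_nonneg (le_of_lt ht) _
    simp [w, X, NNReal.smul_def, this]
  set U : Set ℂ := {z | 0 < z.re}
  have h1 : AnalyticOnNhd ℂ (ProbabilityTheory.complexMGF X ν) U := fun z hz =>
    ProbabilityTheory.analyticAt_complexMGF (hset hz)
  have h2 : AnalyticOnNhd ℂ (fun z : ℂ => (1 / z) ^ (a : ℂ) * (Real.Gamma a : ℂ)) U := by
    refine DifferentiableOn.analyticOnNhd (fun z hz => ?_)
      (isOpen_lt continuous_const Complex.continuous_re)
    have hz0 : z ≠ 0 := by rintro rfl; simp [U] at hz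
    refine DifferentiableAt.differentiableWithinAt (DifferentiableAt.mul_const ?_ _)
    refine DifferentiableAt.cpow_const (by fun_prop (disch := assumption)) (Or.inl ?_)
    rw [one_div, Complex.inv_re]
    exact div_pos hz (Complex.normSq_pos.2 hz0)
  rw [← hF]
  refine h1.eqOn_of_preconnected_of_frequently_eq h2 (convex_halfSpace_re_gt 0).isPreconnected
    (z₀ := ((1 : ℝ) : ℂ)) (by simp [U]) ?_ hr
  have ht : Filter.Tendsto (fun x : ℝ => (x : ℂ)) (nhdsWithin 1 {1}ᶜ)
      (nhdsWithin ((1 : ℝ) : ℂ) {((1 : ℝ) : ℂ)}ᶜ) :=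
    Complex.continuous_ofReal.continuousWithinAt.tendsto_nhdsWithin (fun x hx => by simpa using hx)
  refine ht.frequently (Filter.Eventually.frequently ?_)
  filter_upwards [mem_nhdsWithin_of_mem_nhds (Ioi_mem_nhds (zero_lt_one' ℝ))] with x hx
  rw [hF, ← Complex.Gamma_ofReal,
    ← Complex.integral_cpow_mul_exp_neg_mul_Ioi (a := (a : ℂ)) (by simpa using ha) hx]
  refine setIntegral_congr_fun measurableSet_Ioi fun t ht => ?_
  rw [Complex.ofReal_cpow (le_of_lt ht)]
  simp

theorem norm_one_div_add_mul_I_cpow_le {a y : ℝ} (ha : 0 ≤ a) (hy : y ≠ 0) (ε : ℝ) :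
    ‖(1 / ((ε : ℂ) + y * Complex.I)) ^ (a : ℂ)‖ ≤ |y| ^ (-a) := by
  have h1 : |y| ≤ ‖(ε : ℂ) + y * Complex.I‖ := by
    simpa using Complex.abs_im_le_norm ((ε : ℂ) + y * Complex.I)
  have hy' : 0 < |y| := abs_pos.2 hy
  rw [Complex.norm_cpow_real, one_div, norm_inv, rpow_neg hy'.le, ← inv_rpow hy'.le]
  gcongr

theorem re_one_div_mul_I_cpow {a y : ℝ} (hy : y ≠ 0) :
    ((1 / ((y : ℂ) * Complex.I)) ^ (a : ℂ)).re = |y| ^ (-a) * Real.cos (a * π / 2) := by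
  have hy' : 0 < |y| := abs_pos.2 hy
  have h0 : (1 / ((y : ℂ) * Complex.I)) = ((y⁻¹ : ℝ) : ℂ) * (-Complex.I) := by
    push_cast
    rw [one_div, mul_inv, Complex.inv_I]
  have harg : Real.cos (Complex.arg (((y⁻¹ : ℝ) : ℂ) * (-Complex.I)) * a) =
      Real.cos (a * π / 2) := by
    rcases lt_or_gt_of_ne hy with h | h
    · rw [show ((y⁻¹ : ℝ) : ℂ) * (-Complex.I) = ((-y⁻¹ : ℝ) : ℂ) * Complex.I by push_cast; ring,
        Complex.arg_real_mul _ (by simpa using h), Complex.arg_I]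
      congr 1; ring
    · rw [Complex.arg_real_mul _ (by simpa using h), Complex.arg_neg_I, ← Real.cos_neg]
      congr 1; ring
  have hne : ((y⁻¹ : ℝ) : ℂ) * (-Complex.I) ≠ 0 := by simp [hy]
  rw [h0, Complex.cpow_def_of_ne_zero hne, Complex.exp_re, Complex.re_mul_ofReal,
    Complex.im_mul_ofReal, Complex.log_re, Complex.log_im, harg]
  congr 1
  rw [rpow_def_of_pos hy']
  simp

/-- An integrable bounded function stays integrable against a locally integrable power weight. -/
theorem integrable_abs_mul_rpow_neg_mul {a c C : ℝ} (ha0 : 0 ≤ a) (ha1 : a < 1) (hc : 1 ≤ c)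
    {φ : ℝ → ℝ} (hφ : Integrable φ) (hC : ∀ ξ, |φ ξ| ≤ C) :
    Integrable (fun ξ : ℝ => |c * ξ| ^ (-a) * φ ξ) := by
  have hloc : LocallyIntegrable (fun ξ : ℝ => |c * ξ| ^ (-a)) := by
    refine locallyIntegrable_of_norm_le_rpow (C := c ^ (-a)) (α := a) (by simp) (by simpa using ha1)
      (.of_forall fun ξ => ?_)
      (Measurable.pow_const (by fun_prop) _).aestronglyMeasurable
    rw [norm_of_nonneg (by positivity), abs_mul, mul_rpow (abs_nonneg _) (abs_nonneg _),
      abs_of_nonneg (by linarith), Real.norm_eq_abs]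
  have hI := (integrable_indicator_iff measurableSet_Icc).2
    (hloc.integrableOn_isCompact (isCompact_Icc (a := (-1 : ℝ)) (b := 1)))
  refine ((hI.const_mul C).add hφ.abs).mono' (hloc.aestronglyMeasurable.mul hφ.1) (.of_forall fun ξ => ?_)
  have hp : 0 ≤ |c * ξ| ^ (-a) := by positivity
  rw [Pi.add_apply, norm_mul, norm_of_nonneg hp, Real.norm_eq_abs]
  by_cases hξ : ξ ∈ Icc (-1 : ℝ) 1
  · rw [indicator_of_mem hξ]
    nlinarith [hC ξ, abs_nonneg (φ ξ)]
  · rw [indicator_of_notMem hξ, mul_zero, zero_add]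
    refine mul_le_of_le_one_left (abs_nonneg _) (rpow_le_one_of_one_le_of_nonpos ?_ (by linarith))
    have : 1 < |ξ| := by
      by_contra! h
      exact hξ (abs_le.1 h)
    rw [abs_mul, abs_of_nonneg (by linarith)]
    nlinarith

/-- The autocorrelation of `u` is the Fourier transform of the power spectrum of `u`. -/
theorem integral_mul_comp_sub_eq_integral_norm_fourier_sq {u : ℝ → ℝ} (hu : ContDiff ℝ (⊤ : ℕ∞) u)
    (hcs : HasCompactSupport u) (t : ℝ) :
    ((∫ x : ℝ, u x * u (x - t) : ℝ) : ℂ) =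
      ∫ ξ : ℝ, Complex.exp (-((2 * π * ξ : ℝ) * Complex.I * t)) *
        ((‖𝓕 (fun x : ℝ => (u x : ℂ)) ξ‖ ^ 2 : ℝ) : ℂ) := by
  have hU : ContDiff ℝ (⊤ : ℕ∞) (fun x : ℝ => (u x : ℂ)) := Complex.ofRealCLM.contDiff.comp hu
  have hUc : HasCompactSupport (fun x : ℝ => (u x : ℂ)) := hcs.comp_left Complex.ofReal_zero
  have hV : ContDiff ℝ (⊤ : ℕ∞) (fun x : ℝ => (u (x + -t) : ℂ)) :=
    hU.comp (contDiff_id.add contDiff_const)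
  have hVc : HasCompactSupport (fun x : ℝ => (u (x + -t) : ℂ)) :=
    hUc.comp_homeomorph (Homeomorph.addRight (-t))
  have hP := SchwartzMap.integral_inner_fourier_fourier (hUc.toSchwartzMap hU) (hVc.toSchwartzMap hV)
  have hshift (ξ : ℝ) : 𝓕 (fun x : ℝ => (u (x + -t) : ℂ)) ξ =
      Complex.exp (-((2 * π * ξ : ℝ) * Complex.I * t)) * 𝓕 (fun x : ℝ => (u x : ℂ)) ξ := by
    have := congrFun (VectorFourier.fourierIntegral_comp_add_right Real.fourierChar volume
      (innerₗ ℝ) (fun x : ℝ => (u x : ℂ)) (-t)) ξ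
    refine this.trans ?_
    rw [Circle.smul_def, Real.fourierChar_apply, smul_eq_mul]
    congr 2
    simp
    ring
  rw [← integral_complex_ofReal]
  refine Eq.trans ?_ (hP.symm.trans ?_)
  · congr 1 with x
    simp [sub_eq_add_neg, mul_comm]
  · congr 1 with ξ
    rw [SchwartzMap.fourier_coe, SchwartzMap.fourier_coe]
    change inner ℂ (𝓕 (fun x : ℝ => (u x : ℂ)) ξ) (𝓕 (fun x : ℝ => (u (x + -t) : ℂ)) ξ) = _
    rw [hshift, RCLike.inner_apply, mul_assoc, Complex.mul_conj, Complex.normSq_eq_norm_sq]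

theorem integrable_rpow_mul_mul_comp_sub {a : ℝ} (ha : 0 < a) {u : ℝ → ℝ} (hu : Continuous u)
    (hcs : HasCompactSupport u) :
    Integrable (fun p : ℝ × ℝ => p.2 ^ (a - 1) * (u p.1 * u (p.1 - p.2)))
      (volume.prod (volume.restrict (Ioi 0))) := by
  obtain ⟨C, hC⟩ := hcs.exists_bound_of_continuous hu
  obtain ⟨R, hR⟩ := hcs.isCompact.isBounded.subset_closedBall 0
  have hRu : ∀ x, u x ≠ 0 → |x| ≤ R := fun x hx => by
    simpa using hR (subset_tsupport u hx)
  have hpow : IntegrableOn (fun t : ℝ => t ^ (a - 1)) (Ioc 0 (2 * R)) := by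
    rcases le_total 0 (2 * R) with h | h
    · exact (intervalIntegrable_iff_integrableOn_Ioc_of_le h).1
        (intervalIntegral.intervalIntegrable_rpow' (by linarith))
    · simp [Ioc_eq_empty (not_lt.2 h)]
  have hpow' : Integrable ((Ioc 0 (2 * R)).indicator fun t : ℝ => t ^ (a - 1))
      (volume.restrict (Ioi 0)) :=
    ((integrable_indicator_iff measurableSet_Ioc).2 hpow).restrict
  refine (((hu.integrable_of_hasCompactSupport hcs).abs.const_mul C).mul_prod hpow').mono'
    ?_ ?_
  · exact ((measurable_snd.pow_const _).mul ((hu.comp continuous_fst).mul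
      (hu.comp (continuous_fst.sub continuous_snd))).measurable).aestronglyMeasurable
  have hpos : ∀ᵐ p : ℝ × ℝ ∂(volume.prod (volume.restrict (Ioi 0))), p.2 ∈ Ioi (0 : ℝ) :=
    Measure.quasiMeasurePreserving_snd.ae (ae_restrict_mem measurableSet_Ioi)
  filter_upwards [hpos] with ⟨x, t⟩ ht
  simp only [mem_Ioi] at ht
  have hC0 : 0 ≤ C := (norm_nonneg _).trans (hC 0)
  have hp : 0 ≤ t ^ (a - 1) := by positivity
  by_cases h : u x = 0 ∨ u (x - t) = 0
  · have : u x * u (x - t) = 0 := mul_eq_zero.2 h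
    simp only [this, mul_zero, norm_zero]
    exact mul_nonneg (by positivity) (indicator_nonneg (fun s hs => rpow_nonneg hs.1.le _) _)
  · rw [not_or] at h
    have h1 := abs_le.1 (hRu _ h.1)
    have h2 := abs_le.1 (hRu _ h.2)
    have hmem : t ∈ Ioc 0 (2 * R) := ⟨ht, by linarith⟩
    simp only [indicator_of_mem hmem, norm_mul, norm_of_nonneg hp]
    have h3 := hC (x - t)
    calc t ^ (a - 1) * (‖u x‖ * ‖u (x - t)‖) ≤ t ^ (a - 1) * (‖u x‖ * C) := by gcongr
      _ = _ := by rw [Real.norm_eq_abs]; ring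

theorem integral_Iio_sub_rpow_mul (a x : ℝ) (u : ℝ → ℝ) :
    ∫ s in Iio x, (x - s) ^ (a - 1) * u s = ∫ t in Ioi (0 : ℝ), t ^ (a - 1) * u (x - t) := by
  rw [← integral_indicator measurableSet_Iio, ← integral_indicator measurableSet_Ioi,
    ← integral_sub_left_eq_self _ volume x]
  refine integral_congr_ae (.of_forall fun t => ?_)
  by_cases ht : 0 < t
  · simp [ht]
  · simp [ht]

theorem integral_rpow_mul_cexp_mul_fourier {a ε : ℝ} (ha : 0 < a) (hε : 0 < ε) {φ : ℝ → ℝ}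
    (hφ : Integrable φ) :
    ∫ t in Ioi (0 : ℝ), ((t ^ (a - 1) : ℝ) : ℂ) * Complex.exp (-(ε * t)) *
        ∫ ξ : ℝ, Complex.exp (-((2 * π * ξ : ℝ) * Complex.I * t)) * (φ ξ : ℂ) =
      ∫ ξ : ℝ, (1 / ((ε : ℂ) + (2 * π * ξ : ℝ) * Complex.I)) ^ (a : ℂ) * Real.Gamma a * φ ξ := by
  have hbd := (integrableOn_rpow_mul_exp_neg_mul ha hε).mul_prod hφ.abs
  have hF : Integrable (fun p : ℝ × ℝ => ((p.1 ^ (a - 1) : ℝ) : ℂ) *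
      Complex.exp (-(((ε : ℂ) + (2 * π * p.2 : ℝ) * Complex.I) * p.1)) * (φ p.2 : ℂ))
      ((volume.restrict (Ioi 0)).prod volume) := by
    refine hbd.mono' ?_ ?_
    · refine AEStronglyMeasurable.mul (Measurable.aestronglyMeasurable (by fun_prop)) ?_
      exact (Complex.continuous_ofReal.comp_aestronglyMeasurable hφ.1).comp_snd
    · have hpos : ∀ᵐ p : ℝ × ℝ ∂((volume.restrict (Ioi 0)).prod volume), p.1 ∈ Ioi (0 : ℝ) :=
        Measure.quasiMeasurePreserving_fst.ae (ae_restrict_mem measurableSet_Ioi)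
      filter_upwards [hpos] with ⟨t, ξ⟩ ht
      have hp : 0 ≤ t ^ (a - 1) := rpow_nonneg (le_of_lt ht) _
      simp [Complex.norm_exp, abs_of_nonneg hp]
  calc _ = ∫ t in Ioi (0 : ℝ), ∫ ξ : ℝ, ((t ^ (a - 1) : ℝ) : ℂ) *
        Complex.exp (-(((ε : ℂ) + (2 * π * ξ : ℝ) * Complex.I) * t)) * (φ ξ : ℂ) := by
        congr 1 with t
        rw [← integral_const_mul]
        congr 1 with ξ
        rw [add_mul, neg_add, Complex.exp_add]
        ring
    _ = ∫ ξ : ℝ, ∫ t in Ioi (0 : ℝ), ((t ^ (a - 1) : ℝ) : ℂ) *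
        Complex.exp (-(((ε : ℂ) + (2 * π * ξ : ℝ) * Complex.I) * t)) * (φ ξ : ℂ) :=
        integral_integral_swap hF
    _ = _ := by
        congr 1 with ξ
        rw [integral_mul_const, integral_rpow_mul_cexp_neg_mul_Ioi ha (by simpa using hε)]

theorem integral_rpow_mul_eq_integral_cpow_mul {a C : ℝ} (ha : 0 < a) (ha1 : a < 1) {φ g : ℝ → ℝ}
    (hφ : Integrable φ) (hC : ∀ ξ, |φ ξ| ≤ C)
    (hg : IntegrableOn (fun t => t ^ (a - 1) * g t) (Ioi 0))
    (hgφ : ∀ t, (g t : ℂ) =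
      ∫ ξ : ℝ, Complex.exp (-((2 * π * ξ : ℝ) * Complex.I * t)) * (φ ξ : ℂ)) :
    ∫ t in Ioi (0 : ℝ), t ^ (a - 1) * g t =
      Real.cos (a * π / 2) * Real.Gamma a * ∫ ξ : ℝ, |2 * π * ξ| ^ (-a) * φ ξ := by
  have hdom := (integrable_abs_mul_rpow_neg_mul (c := 2 * π) ha.le ha1
    (by linarith [Real.two_le_pi]) hφ.abs (C := C) (by simpa using hC)).const_mul (Real.Gamma a)
  have hΓ := Real.Gamma_pos_of_pos ha
  set K : ℝ → ℝ → ℂ := fun ε ξ =>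
    (1 / ((ε : ℂ) + (2 * π * ξ : ℝ) * Complex.I)) ^ (a : ℂ) * Real.Gamma a * φ ξ
  have hKm : ∀ ε, AEStronglyMeasurable (K ε) volume := fun ε =>
    AEStronglyMeasurable.mul (Measurable.aestronglyMeasurable (by fun_prop))
      (Complex.continuous_ofReal.comp_aestronglyMeasurable hφ.1)
  have hne : ∀ᵐ ξ : ℝ, 2 * π * ξ ≠ 0 := by
    filter_upwards [Measure.ae_ne volume (0 : ℝ)] with ξ hξ
    exact mul_ne_zero (by positivity) hξ
  have hKb : ∀ ε, ∀ᵐ ξ : ℝ, ‖K ε ξ‖ ≤ Real.Gamma a * (|2 * π * ξ| ^ (-a) * |φ ξ|) := by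
    intro ε
    filter_upwards [hne] with ξ hξ
    have h := norm_one_div_add_mul_I_cpow_le ha.le hξ ε
    rw [norm_mul, norm_mul, Complex.norm_real, Complex.norm_real, norm_of_nonneg hΓ.le,
      Real.norm_eq_abs, mul_right_comm, mul_comm]
    gcongr
  have hR : Filter.Tendsto (fun ε : ℝ => ∫ ξ, K ε ξ) (nhdsWithin 0 (Ioi 0))
      (nhds (∫ ξ, K 0 ξ)) := by
    refine tendsto_integral_filter_of_dominated_convergence _ (.of_forall hKm) (.of_forall hKb)
      hdom ?_
    filter_upwards [hne] with ξ hξ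
    refine Filter.Tendsto.mono_left (ContinuousAt.tendsto ?_) nhdsWithin_le_nhds
    have hz : ((0 : ℝ) : ℂ) + (2 * π * ξ : ℝ) * Complex.I ≠ 0 := by
      rw [Complex.ofReal_zero, zero_add]
      exact mul_ne_zero (Complex.ofReal_ne_zero.2 hξ) Complex.I_ne_zero
    refine ((ContinuousAt.cpow ?_ continuousAt_const ?_).mul continuousAt_const).mul
      continuousAt_const
    · exact ContinuousAt.div continuousAt_const (by fun_prop) hz
    · refine Or.inr ?_
      rw [Complex.ofReal_zero, zero_add, one_div, Complex.inv_im]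
      refine div_ne_zero ?_ ?_
      · simpa using hξ
      · simpa using hξ
  have hL : Filter.Tendsto (fun ε : ℝ => ∫ t in Ioi (0 : ℝ),
      ((t ^ (a - 1) : ℝ) : ℂ) * Complex.exp (-(ε * t)) * (g t : ℂ)) (nhdsWithin 0 (Ioi 0))
      (nhds (∫ t in Ioi (0 : ℝ), ((t ^ (a - 1) * g t : ℝ) : ℂ))) := by
    have hmeas (ε : ℝ) : AEStronglyMeasurable (fun t : ℝ => ((t ^ (a - 1) : ℝ) : ℂ) *
        Complex.exp (-(ε * t)) * (g t : ℂ)) (volume.restrict (Ioi 0)) := by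
      have h1 : AEStronglyMeasurable (fun t : ℝ => Complex.exp (-((ε : ℂ) * t)))
        (volume.restrict (Ioi 0)) := Measurable.aestronglyMeasurable (by fun_prop)
      refine (h1.mul (Complex.continuous_ofReal.comp_aestronglyMeasurable hg.1)).congr
        (.of_forall fun t => ?_)
      simp only [Pi.mul_apply, Complex.ofReal_mul]
      ring
    refine tendsto_integral_filter_of_dominated_convergence
      (fun t => |t ^ (a - 1) * g t|) (.of_forall hmeas) ?_ hg.abs ?_
    · filter_upwards [self_mem_nhdsWithin] with ε hε
      filter_upwards [ae_restrict_mem measurableSet_Ioi] with t ht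
      have hexp : Real.exp (-(ε * t)) ≤ 1 :=
        Real.exp_le_one_iff.2 (neg_nonpos.2 (mul_nonneg (le_of_lt hε) (le_of_lt ht)))
      rw [norm_mul, norm_mul, Complex.norm_real, Complex.norm_real, Complex.norm_exp, abs_mul,
        Real.norm_eq_abs, Real.norm_eq_abs]
      have : (-((ε : ℂ) * t)).re = -(ε * t) := by simp
      rw [this]
      gcongr
      exact mul_le_of_le_one_right (abs_nonneg _) hexp
    · refine .of_forall fun t => Filter.Tendsto.mono_left ?_ nhdsWithin_le_nhds
      have : Continuous fun ε : ℝ => ((t ^ (a - 1) : ℝ) : ℂ) * Complex.exp (-(ε * t)) * (g t : ℂ) :=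
        by fun_prop
      convert this.tendsto 0 using 2
      simp
  have hEq : (fun ε : ℝ => ∫ t in Ioi (0 : ℝ),
      ((t ^ (a - 1) : ℝ) : ℂ) * Complex.exp (-(ε * t)) * (g t : ℂ)) =ᶠ[nhdsWithin 0 (Ioi 0)]
      fun ε => ∫ ξ, K ε ξ := by
    filter_upwards [self_mem_nhdsWithin] with ε hε
    simp_rw [hgφ]
    exact integral_rpow_mul_cexp_mul_fourier ha hε hφ
  have hlim := tendsto_nhds_unique (hL.congr' hEq) hR
  rw [integral_complex_ofReal] at hlim
  have hre := congrArg Complex.re hlim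
  have hK0 : Integrable (K 0) := hdom.mono' (hKm 0) (hKb 0)
  rw [Complex.ofReal_re, ← Complex.reCLM_apply, ← Complex.reCLM.integral_comp_comm hK0] at hre
  rw [hre, ← integral_const_mul]
  refine integral_congr_ae ?_
  filter_upwards [hne] with ξ hξ
  simp only [K, Complex.reCLM_apply, Complex.ofReal_zero, zero_add, Complex.re_mul_ofReal]
  rw [re_one_div_mul_I_cpow hξ]
  ring

theorem integral_mul_leftRLIntegral {μ : ℝ} (hμ : 0 < μ) {u : ℝ → ℝ} (hu : Continuous u)
    (hcs : HasCompactSupport u) :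
    ∫ x : ℝ, u x * leftRLIntegral μ u x =
      (1 / Real.Gamma μ) * ∫ t in Ioi (0 : ℝ), t ^ (μ - 1) * ∫ x : ℝ, u x * u (x - t) := by
  have hswap := integral_integral_swap
    (f := fun x t => t ^ (μ - 1) * (u x * u (x - t))) (integrable_rpow_mul_mul_comp_sub hμ hu hcs)
  simp_rw [integral_const_mul] at hswap
  rw [← hswap, ← integral_const_mul]
  congr 1 with x
  rw [leftRLIntegral, integral_Iio_sub_rpow_mul, mul_left_comm, ← integral_const_mul]
  congr 2 with t
  ring

theorem stmt9 (μ : ℝ) (hμ0 : 0 < μ) (hμ1 : μ < 1) (u : ℝ → ℝ)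
    (hu : ContDiff ℝ (⊤ : ℕ∞) u) (hcs : HasCompactSupport u) :
    ((∫ x : ℝ, u x * leftRLIntegral μ u x) =
      Real.cos (μ * Real.pi / 2) *
        ∫ ξ : ℝ, |2 * Real.pi * ξ| ^ (-μ) * ‖𝓕 (fun x : ℝ => (u x : ℂ)) ξ‖ ^ 2) ∧
    0 ≤ ∫ x : ℝ, u x * leftRLIntegral μ u x := by
  have hU : ContDiff ℝ (⊤ : ℕ∞) (fun x : ℝ => (u x : ℂ)) := Complex.ofRealCLM.contDiff.comp hu
  have hUc : HasCompactSupport (fun x : ℝ => (u x : ℂ)) := hcs.comp_left Complex.ofReal_zero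
  have hφ : Integrable (fun ξ : ℝ => ‖𝓕 (fun x : ℝ => (u x : ℂ)) ξ‖ ^ 2) := by
    have h := (𝓕 (hUc.toSchwartzMap hU)).memLp 2 volume
    rw [memLp_two_iff_integrable_sq_norm h.1] at h
    rwa [SchwartzMap.fourier_coe] at h
  have hb (ξ : ℝ) : |‖𝓕 (fun x : ℝ => (u x : ℂ)) ξ‖ ^ 2| ≤ (∫ x : ℝ, ‖(u x : ℂ)‖) ^ 2 := by
    rw [abs_of_nonneg (by positivity)]
    gcongr
    exact VectorFourier.norm_fourierIntegral_le_integral_norm _ _ _ _ _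
  have hg : IntegrableOn (fun t : ℝ => t ^ (μ - 1) * ∫ x : ℝ, u x * u (x - t)) (Ioi 0) := by
    have h := (integrable_rpow_mul_mul_comp_sub hμ0 hu.continuous hcs).integral_prod_right
    simp only [integral_const_mul] at h
    exact h
  have hmain : ∫ x : ℝ, u x * leftRLIntegral μ u x = Real.cos (μ * Real.pi / 2) *
      ∫ ξ : ℝ, |2 * Real.pi * ξ| ^ (-μ) * ‖𝓕 (fun x : ℝ => (u x : ℂ)) ξ‖ ^ 2 := by
    rw [integral_mul_leftRLIntegral hμ0 hu.continuous hcs,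
      integral_rpow_mul_eq_integral_cpow_mul hμ0 hμ1 hφ hb hg
        (integral_mul_comp_sub_eq_integral_norm_fourier_sq hu hcs)]
    have := (Real.Gamma_pos_of_pos hμ0).ne'
    field_simp
  refine ⟨hmain, hmain ▸ mul_nonneg ?_ (integral_nonneg fun ξ => by positivity)⟩
  exact Real.cos_nonneg_of_mem_Icc ⟨by nlinarith [Real.pi_pos], by nlinarith [Real.pi_pos]⟩
end

section
/- Let a < b be real numbers, 0 < μ < 1, and let u : ℝ → ℝ be smooth with compact support contained in the open interval (a,b). Then the fractional integral form is coercive with respect to the half-order fractional integral norm: ∫_a^b u(x) · (I_{a+}^μ u)(x) dx ≥ cos(μπ/2) · ∫_a^b ((I_{a+}^{μ/2} u)(x))² dx. -/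
open MeasureTheory Real Set

/-- Left Riemann–Liouville fractional integral of order `μ` with base point `a`:
`(I_{a+}^μ u)(x) = (1/Γ(μ)) ∫_a^x (x−s)^{μ−1} u(s) ds`. -/
noncomputable def leftRL (a μ : ℝ) (u : ℝ → ℝ) (x : ℝ) : ℝ :=
  (1 / Real.Gamma μ) * ∫ s in a..x, (x - s) ^ (μ - 1) * u s

/-- The Beta integral over the half-line. -/
theorem lintegral_rpow_mul_add_rpow {p q d : ℝ} (hp : 0 < p) (hpq : p < q) (hd : 0 < d) :
    ∫⁻ y in Ioi (0 : ℝ), ENNReal.ofReal (y ^ (p - 1) * (y + d) ^ (-q)) =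
      ENNReal.ofReal (Gamma p * Gamma (q - p) / Gamma q * d ^ (p - q)) := by
  have hq : 0 < q := hp.trans hpq
  have gamma_lintegral : ∀ {c r : ℝ}, 0 < c → 0 < r →
      ∫⁻ t in Ioi (0 : ℝ), ENNReal.ofReal (t ^ (c - 1) * exp (-(r * t))) =
        ENNReal.ofReal (r ^ (-c) * Gamma c) := by
    intro c r hc hr
    have hval := integral_rpow_mul_exp_neg_mul_Ioi hc hr
    rw [one_div, inv_rpow hr.le, ← rpow_neg hr.le] at hval
    rw [← hval, ofReal_integral_eq_lintegral_ofReal]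
    · refine MeasureTheory.Integrable.of_integral_ne_zero ?_
      rw [hval]
      exact (mul_pos (rpow_pos_of_pos hr _) (Gamma_pos_of_pos hc)).ne'
    · filter_upwards [self_mem_ae_restrict measurableSet_Ioi] with t ht
      exact mul_nonneg (rpow_nonneg (le_of_lt ht) _) (exp_pos _).le
  have hΓ : 0 < Gamma q := Gamma_pos_of_pos hq
  have hfac : ∀ y ∈ Ioi (0 : ℝ), ENNReal.ofReal (Gamma q) *
      ENNReal.ofReal (y ^ (p - 1) * (y + d) ^ (-q)) =
      ∫⁻ t in Ioi (0 : ℝ), ENNReal.ofReal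
        (y ^ (p - 1) * (t ^ (q - 1) * exp (-((y + d) * t)))) := by
    intro y hy
    have hy0 : (0 : ℝ) ≤ y ^ (p - 1) := rpow_nonneg (le_of_lt hy) _
    simp_rw [ENNReal.ofReal_mul hy0]
    rw [lintegral_const_mul _ (by fun_prop), gamma_lintegral hq (add_pos hy hd),
      ENNReal.ofReal_mul (rpow_nonneg (add_pos hy hd).le _)]
    ring
  have hfac' : ∀ t ∈ Ioi (0 : ℝ), ∫⁻ y in Ioi (0 : ℝ), ENNReal.ofReal
        (y ^ (p - 1) * (t ^ (q - 1) * exp (-((y + d) * t)))) =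
      ENNReal.ofReal (Gamma p) * ENNReal.ofReal (t ^ (q - p - 1) * exp (-(d * t))) := by
    intro t ht
    have ht' : 0 < t := ht
    have h0 : 0 ≤ t ^ (q - 1) * exp (-(d * t)) := by positivity
    have : ∀ y : ℝ, y ^ (p - 1) * (t ^ (q - 1) * exp (-((y + d) * t))) =
        (t ^ (q - 1) * exp (-(d * t))) * (y ^ (p - 1) * exp (-(t * y))) := by
      intro y
      rw [show -((y + d) * t) = -(d * t) + -(t * y) by ring, exp_add]
      ring
    simp_rw [this, ENNReal.ofReal_mul h0]
    rw [lintegral_const_mul _ (by fun_prop), gamma_lintegral hp ht', ← ENNReal.ofReal_mul h0,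
      ← ENNReal.ofReal_mul (Gamma_pos_of_pos hp).le]
    congr 1
    rw [show q - p - 1 = (q - 1) + -p by ring, rpow_add ht']
    ring
  have hmul : ENNReal.ofReal (Gamma q) *
      ∫⁻ y in Ioi (0 : ℝ), ENNReal.ofReal (y ^ (p - 1) * (y + d) ^ (-q)) =
      ENNReal.ofReal (Gamma q) *
        ENNReal.ofReal (Gamma p * Gamma (q - p) / Gamma q * d ^ (p - q)) := by
    rw [← lintegral_const_mul _ (by fun_prop), setLIntegral_congr_fun measurableSet_Ioi hfac,
      lintegral_lintegral_swap (by fun_prop), setLIntegral_congr_fun measurableSet_Ioi hfac',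
      lintegral_const_mul _ (by fun_prop), gamma_lintegral (sub_pos.2 hpq) hd,
      ← ENNReal.ofReal_mul (Gamma_pos_of_pos hp).le, ← ENNReal.ofReal_mul hΓ.le, neg_sub]
    congr 1
    field_simp
  exact (ENNReal.mul_right_inj (by simpa using hΓ) ENNReal.ofReal_ne_top).1 hmul

/-- The kernel `x₊ ^ (μ - 1)` of the fractional integral. -/
noncomputable def rlKernel (μ x : ℝ) : ℝ := (Ioi (0 : ℝ)).indicator (fun y => y ^ (μ - 1)) x

theorem rlKernel_nonneg (μ x : ℝ) : 0 ≤ rlKernel μ x :=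
  indicator_nonneg (fun _ hy => rpow_nonneg (le_of_lt hy) _) x

@[fun_prop]
theorem measurable_rlKernel (μ : ℝ) : Measurable (rlKernel μ) :=
  Measurable.indicator (by fun_prop) measurableSet_Ioi

theorem rlKernel_add_rlKernel_neg {μ : ℝ} (hμ : μ ≠ 1) (x : ℝ) :
    rlKernel μ x + rlKernel μ (-x) = |x| ^ (μ - 1) := by
  unfold rlKernel
  rcases lt_trichotomy x 0 with h | rfl | h
  · simp [h, h.not_gt, abs_of_neg]
  · simp [zero_rpow (sub_ne_zero.2 hμ)]
  · simp [h, h.not_gt, abs_of_pos]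

theorem lintegral_rlKernel_mul_rlKernel {ν s t : ℝ} (hν : 0 < ν) (hν' : 2 * ν < 1)
    (hst : s ≠ t) :
    ∫⁻ x, ENNReal.ofReal (rlKernel ν (x - s) * rlKernel ν (x - t)) =
      ENNReal.ofReal (Gamma ν * Gamma (1 - 2 * ν) / Gamma (1 - ν) * |s - t| ^ (2 * ν - 1)) := by
  wlog h : s < t generalizing s t
  · rw [abs_sub_comm, ← this hst.symm (lt_of_le_of_ne (not_lt.1 h) hst.symm)]
    simp_rw [mul_comm]
  have hd : 0 < t - s := sub_pos.2 h
  rw [← lintegral_add_right_eq_self _ t, abs_sub_comm, abs_of_pos hd]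
  have key := lintegral_rpow_mul_add_rpow hν (q := 1 - ν) (by linarith) hd
  rw [show 1 - ν - ν = 1 - 2 * ν by ring, show ν - (1 - ν) = 2 * ν - 1 by ring] at key
  rw [← key, ← lintegral_indicator measurableSet_Ioi]
  congr 1
  ext y
  by_cases hy : 0 < y
  · have h1 : 0 < y + t - s := by linarith
    have h2 : y + t - s = y + (t - s) := by ring
    have h3 : -(1 - ν) = ν - 1 := by ring
    simp only [rlKernel, indicator, mem_Ioi, h1, hy, add_sub_cancel_right, if_true]
    rw [h2, h3, mul_comm]
  · simp [rlKernel, hy]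

theorem integrable_rlKernel_mul_rlKernel {ν s t : ℝ} (hν : 0 < ν) (hν' : 2 * ν < 1)
    (hst : s ≠ t) : Integrable fun x => rlKernel ν (x - s) * rlKernel ν (x - t) := by
  refine ⟨by fun_prop, ?_⟩
  rw [hasFiniteIntegral_iff_ofReal
    (ae_of_all _ fun x => mul_nonneg (rlKernel_nonneg _ _) (rlKernel_nonneg _ _)),
    lintegral_rlKernel_mul_rlKernel hν hν' hst]
  exact ENNReal.ofReal_lt_top

theorem integral_rlKernel_mul_rlKernel {ν s t : ℝ} (hν : 0 < ν) (hν' : 2 * ν < 1)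
    (hst : s ≠ t) :
    ∫ x, rlKernel ν (x - s) * rlKernel ν (x - t) =
      Gamma ν * Gamma (1 - 2 * ν) / Gamma (1 - ν) * |s - t| ^ (2 * ν - 1) := by
  have h1 := Gamma_pos_of_pos hν
  have h2 : 0 < Gamma (1 - 2 * ν) := Gamma_pos_of_pos (by linarith)
  have h3 : 0 < Gamma (1 - ν) := Gamma_pos_of_pos (by linarith)
  rw [integral_eq_lintegral_of_nonneg_ae
    (ae_of_all _ fun x => mul_nonneg (rlKernel_nonneg _ _) (rlKernel_nonneg _ _)) (by fun_prop),
    lintegral_rlKernel_mul_rlKernel hν hν' hst, ENNReal.toReal_ofReal (by positivity)]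

theorem leftRL_eq_integral_rlKernel {a b μ x : ℝ} (hμ : μ ≠ 1) {u : ℝ → ℝ}
    (hsupp : Function.support u ⊆ Ioo a b) (hx : a < x) :
    leftRL a μ u x = 1 / Gamma μ * ∫ s, rlKernel μ (x - s) * u s := by
  rw [leftRL, intervalIntegral.integral_of_le hx.le, ← integral_indicator measurableSet_Ioc]
  congr 2
  ext s
  by_cases hs : u s = 0
  · simp [hs, indicator]
  have has : a < s := (hsupp hs).1
  rcases lt_trichotomy s x with h | rfl | h
  · simp [rlKernel, has, h, h.le]
  · simp [rlKernel, has, zero_rpow (sub_ne_zero.2 hμ)]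
  · simp [rlKernel, has, h.not_ge, h.not_gt]

theorem ae_fst_ne_snd : ∀ᵐ p : ℝ × ℝ, p.1 ≠ p.2 := by
  rw [Measure.volume_eq_prod, Measure.ae_prod_iff_ae_ae]
  · refine ae_of_all _ fun s => ?_
    filter_upwards [Measure.ae_ne volume s] with t ht using ht.symm
  · exact (measurableSet_eq_fun measurable_fst measurable_snd).compl

theorem integrable_mul_mul_abs_sub_rpow {a b μ : ℝ} (hμ : 0 < μ) {u : ℝ → ℝ}
    (hu : Continuous u) (hcs : HasCompactSupport u) (hsupp : Function.support u ⊆ Ioo a b) :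
    Integrable fun p : ℝ × ℝ => u p.1 * u p.2 * |p.1 - p.2| ^ (μ - 1) := by
  set g : ℝ → ℝ := (Ioc (-(b - a)) (b - a)).indicator fun x => |x| ^ (μ - 1) with hg
  have hgi : Integrable g := by
    rw [hg, integrable_indicator_iff measurableSet_Ioc]
    have hpos : ∀ c : ℝ, IntervalIntegrable (fun x => |x| ^ (μ - 1)) volume 0 |c| := fun c => by
      have hr : -1 < μ - 1 := by linarith
      refine (intervalIntegral.intervalIntegrable_rpow' hr).congr fun x hx => ?_
      rw [uIoc_of_le (abs_nonneg c)] at hx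
      simp only [abs_of_pos hx.1]
    have hneg := (IntervalIntegrable.iff_comp_neg (by simp)).1 (hpos (b - a))
    simp only [abs_neg, neg_zero] at hneg
    refine (hneg.symm.trans (hpos (b - a))).1.mono_set ?_
    exact Ioc_subset_Ioc (neg_le_neg (le_abs_self _)) (le_abs_self _)
  have hconv := hu.integrable_of_hasCompactSupport hcs |>.convolution_integrand
    (ContinuousLinearMap.mul ℝ ℝ) hgi (μ := volume) (ν := volume)
  obtain ⟨C, hC⟩ := hcs.exists_bound_of_continuous hu
  have hbdd := hconv.bdd_mul (c := C) (f := fun p : ℝ × ℝ => u p.1)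
    (hu.comp continuous_fst).aestronglyMeasurable (ae_of_all _ fun p => hC p.1)
  refine hbdd.congr (ae_of_all _ fun p => ?_)
  by_cases h1 : u p.1 = 0
  · simp [h1]
  by_cases h2 : u p.2 = 0
  · simp [h2]
  have h1' := hsupp h1
  have h2' := hsupp h2
  have : p.1 - p.2 ∈ Ioc (-(b - a)) (b - a) :=
    ⟨by linarith [h1'.1, h2'.2], by linarith [h1'.2, h2'.1]⟩
  simp only [ContinuousLinearMap.mul_apply', hg, indicator_of_mem this, mul_assoc]

theorem integral_mul_integral_rlKernel {a b μ : ℝ} (hμ : 0 < μ) (hμ1 : μ ≠ 1) {u : ℝ → ℝ}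
    (hu : Continuous u) (hcs : HasCompactSupport u) (hsupp : Function.support u ⊆ Ioo a b) :
    2 * ∫ x, u x * ∫ s, rlKernel μ (x - s) * u s =
      ∫ p : ℝ × ℝ, u p.1 * u p.2 * |p.1 - p.2| ^ (μ - 1) := by
  have hint := integrable_mul_mul_abs_sub_rpow hμ hu hcs hsupp
  have hG : Integrable fun p : ℝ × ℝ => u p.1 * u p.2 * rlKernel μ (p.1 - p.2) := by
    refine hint.mono (Measurable.aestronglyMeasurable (by fun_prop)) (ae_of_all _ fun p => ?_)
    rw [norm_mul, norm_mul _ (|_| ^ _)]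
    gcongr
    rw [← rlKernel_add_rlKernel_neg hμ1, norm_of_nonneg (rlKernel_nonneg _ _),
      norm_of_nonneg (add_nonneg (rlKernel_nonneg _ _) (rlKernel_nonneg _ _))]
    linarith [rlKernel_nonneg μ (-(p.1 - p.2))]
  have hswap : ∫ p : ℝ × ℝ, u p.2 * u p.1 * rlKernel μ (p.2 - p.1) =
      ∫ p : ℝ × ℝ, u p.1 * u p.2 * rlKernel μ (p.1 - p.2) :=
    integral_prod_swap (μ := volume) (ν := volume)
      fun p : ℝ × ℝ => u p.1 * u p.2 * rlKernel μ (p.1 - p.2)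
  have hiter : ∫ x, u x * ∫ s, rlKernel μ (x - s) * u s =
      ∫ p : ℝ × ℝ, u p.1 * u p.2 * rlKernel μ (p.1 - p.2) := by
    rw [Measure.volume_eq_prod, integral_prod _ hG]
    congr 1
    ext x
    rw [← integral_const_mul]
    congr 1
    ext s
    ring
  rw [two_mul, hiter]
  nth_rewrite 2 [← hswap]
  rw [← integral_add hG (by exact hG.swap)]
  congr 1
  ext p
  rw [← rlKernel_add_rlKernel_neg hμ1, neg_sub]
  ring

theorem integrable_and_integral_sq_integral_rlKernel {a b ν : ℝ} (hν : 0 < ν) (hν' : 2 * ν < 1)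
    {u : ℝ → ℝ} (hu : Continuous u) (hcs : HasCompactSupport u)
    (hsupp : Function.support u ⊆ Ioo a b) :
    Integrable (fun x => (∫ s, rlKernel ν (x - s) * u s) ^ 2) ∧
      ∫ x, (∫ s, rlKernel ν (x - s) * u s) ^ 2 =
        Gamma ν * Gamma (1 - 2 * ν) / Gamma (1 - ν) *
          ∫ p : ℝ × ℝ, u p.1 * u p.2 * |p.1 - p.2| ^ (2 * ν - 1) := by
  have hint := integrable_mul_mul_abs_sub_rpow (mul_pos two_pos hν) hu hcs hsupp
  set F : ℝ × (ℝ × ℝ) → ℝ := fun z =>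
    (u z.2.1 * u z.2.2) * (rlKernel ν (z.1 - z.2.1) * rlKernel ν (z.1 - z.2.2)) with hF
  have hFm : AEStronglyMeasurable F (volume.prod volume) := by
    rw [hF]
    fun_prop
  have hFi : Integrable F (volume.prod volume) := by
    rw [integrable_prod_iff' hFm]
    constructor
    · filter_upwards [ae_fst_ne_snd] with p hp
      exact (integrable_rlKernel_mul_rlKernel hν hν' hp).const_mul (u p.1 * u p.2)
    · refine (hint.norm.const_mul (Gamma ν * Gamma (1 - 2 * ν) / Gamma (1 - ν))).congr ?_
      filter_upwards [ae_fst_ne_snd] with p hp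
      have hn : ∀ x, ‖F (x, p)‖ =
          ‖u p.1 * u p.2‖ * (rlKernel ν (x - p.1) * rlKernel ν (x - p.2)) := fun x => by
        rw [hF, norm_mul, norm_of_nonneg (mul_nonneg (rlKernel_nonneg _ _) (rlKernel_nonneg _ _))]
      simp_rw [hn]
      rw [integral_const_mul, integral_rlKernel_mul_rlKernel hν hν' hp, norm_mul,
        norm_of_nonneg (rpow_nonneg (abs_nonneg _) _)]
      ring
  have hsq : ∀ x, ∫ p, F (x, p) = (∫ s, rlKernel ν (x - s) * u s) ^ 2 := fun x => by
    rw [sq, ← integral_prod_mul, Measure.volume_eq_prod]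
    congr 1
    ext p
    simp only [hF]
    ring
  have hleft := hFi.integral_prod_left
  simp_rw [hsq] at hleft
  refine ⟨hleft, ?_⟩
  simp_rw [← hsq]
  rw [integral_integral_swap (f := fun x p => F (x, p)) hFi, ← integral_const_mul]
  refine integral_congr_ae ?_
  filter_upwards [ae_fst_ne_snd] with p hp
  simp only [hF]
  rw [integral_const_mul, integral_rlKernel_mul_rlKernel hν hν' hp]
  ring

/-- The Gamma factors in the two double integrals match through the reflection formula. -/
theorem cos_mul_Gamma_div {ν : ℝ} (hν : 0 < ν) (hν' : 2 * ν < 1) :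
    cos (π * ν) * (1 / Gamma ν) ^ 2 * (Gamma ν * Gamma (1 - 2 * ν) / Gamma (1 - ν)) =
      1 / (2 * Gamma (2 * ν)) := by
  have h1 := Gamma_pos_of_pos hν
  have h2 : 0 < Gamma (1 - 2 * ν) := Gamma_pos_of_pos (by linarith)
  have h3 : 0 < Gamma (1 - ν) := Gamma_pos_of_pos (by linarith)
  have h4 : 0 < Gamma (2 * ν) := Gamma_pos_of_pos (by linarith)
  have hs : 0 < sin (π * ν) := sin_pos_of_pos_of_lt_pi (by positivity) (by nlinarith [pi_pos])
  have hc : 0 < cos (π * ν) :=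
    cos_pos_of_mem_Ioo ⟨by nlinarith [pi_pos], by nlinarith [pi_pos]⟩
  have r1 := Gamma_mul_Gamma_one_sub ν
  have r2 := Gamma_mul_Gamma_one_sub (2 * ν)
  rw [show π * (2 * ν) = 2 * (π * ν) by ring, sin_two_mul, eq_div_iff (by positivity)] at r2
  rw [eq_div_iff hs.ne'] at r1
  have : 2 * cos (π * ν) * (Gamma (2 * ν) * Gamma (1 - 2 * ν)) = Gamma ν * Gamma (1 - ν) := by
    apply mul_right_cancel₀ hs.ne'
    linarith
  rw [eq_div_iff (by positivity)]
  calc _ = 2 * cos (π * ν) * (Gamma (2 * ν) * Gamma (1 - 2 * ν)) / (Gamma ν * Gamma (1 - ν)) := by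
        field_simp
    _ = 1 := by rw [this, div_self (by positivity)]

theorem stmt10 (a b μ : ℝ) (hab : a < b) (hμ0 : 0 < μ) (hμ1 : μ < 1)
    (u : ℝ → ℝ) (hu : ContDiff ℝ (⊤ : ℕ∞) u) (hcs : HasCompactSupport u)
    (hsupp : tsupport u ⊆ Set.Ioo a b) :
    ∫ x in Set.Ioo a b, u x * leftRL a μ u x ≥
      Real.cos (μ * Real.pi / 2) * ∫ x in Set.Ioo a b, (leftRL a (μ / 2) u x) ^ 2 := by
  have hs : Function.support u ⊆ Ioo a b := (subset_tsupport u).trans hsupp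
  have hν : 0 < μ / 2 := by positivity
  have hν' : 2 * (μ / 2) < 1 := by linarith
  have hleft : ∫ x in Ioo a b, u x * leftRL a μ u x =
      1 / (2 * Gamma μ) * ∫ p : ℝ × ℝ, u p.1 * u p.2 * |p.1 - p.2| ^ (μ - 1) := by
    rw [← integral_mul_integral_rlKernel hμ0 hμ1.ne hu.continuous hcs hs]
    have : ∫ x in Ioo a b, u x * leftRL a μ u x =
        ∫ x in Ioo a b, 1 / Gamma μ * (u x * ∫ s, rlKernel μ (x - s) * u s) :=
      setIntegral_congr_fun measurableSet_Ioo fun x hx => by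
        rw [leftRL_eq_integral_rlKernel hμ1.ne hs hx.1]
        ring
    rw [this, integral_const_mul, setIntegral_eq_integral_of_forall_compl_eq_zero]
    · have := (Gamma_pos_of_pos hμ0).ne'
      field_simp
    · intro x hx
      rw [Function.notMem_support.1 fun h => hx (hs h), zero_mul]
  obtain ⟨hsqi, hsq⟩ :=
    integrable_and_integral_sq_integral_rlKernel hν hν' hu.continuous hcs hs
  have hright : ∫ x in Ioo a b, (leftRL a (μ / 2) u x) ^ 2 ≤
      (1 / Gamma (μ / 2)) ^ 2 * ∫ x, (∫ s, rlKernel (μ / 2) (x - s) * u s) ^ 2 := by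
    have : ∫ x in Ioo a b, (leftRL a (μ / 2) u x) ^ 2 =
        ∫ x in Ioo a b, (1 / Gamma (μ / 2)) ^ 2 * (∫ s, rlKernel (μ / 2) (x - s) * u s) ^ 2 :=
      setIntegral_congr_fun measurableSet_Ioo fun x hx => by
        rw [leftRL_eq_integral_rlKernel (by linarith) hs hx.1, mul_pow]
    rw [this, integral_const_mul]
    refine mul_le_mul_of_nonneg_left ?_ (sq_nonneg _)
    exact setIntegral_le_integral hsqi (ae_of_all _ fun x => sq_nonneg _)
  have hcos : 0 ≤ cos (μ * π / 2) :=
    cos_nonneg_of_mem_Icc ⟨by nlinarith [pi_pos], by nlinarith [pi_pos]⟩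
  refine ge_iff_le.2 ((mul_le_mul_of_nonneg_left hright hcos).trans_eq ?_)
  have hconst := cos_mul_Gamma_div hν hν'
  rw [mul_div_cancel₀ μ two_ne_zero, ← mul_div_assoc π, mul_comm π μ] at hconst
  rw [hleft, hsq, mul_div_cancel₀ μ two_ne_zero, ← hconst]
  ring
end

section
/- Let 0 < μ < 1/2 and let u : ℝ → ℝ be smooth with compact support. Then ∫_ℝ (I₋^μ u)(x) · (I₊^μ u)(x) dx = cos(μπ) · ∫_ℝ |2πξ|^{−2μ} |û(ξ)|² dξ, where û is the Fourier transform of u. -/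
open MeasureTheory Real Set FourierTransform

/-- Right Riemann–Liouville fractional integral of order `μ` on the whole real line:
`(I₊^μ u)(x) = (1/Γ(μ)) ∫_x^∞ (s−x)^{μ−1} u(s) ds`. -/
noncomputable def rightRLIntegral (μ : ℝ) (u : ℝ → ℝ) (x : ℝ) : ℝ :=
  (1 / Real.Gamma μ) * ∫ s in Set.Ioi x, (s - x) ^ (μ - 1) * u s

/-- The one-sided power kernel `y₊^(a - 1)`, vanishing for `y ≤ 0`. -/
noncomputable def posPow (a y : ℝ) : ℝ := (Ioi (0 : ℝ)).indicator (fun z => z ^ (a - 1)) y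

lemma posPow_of_pos {a y : ℝ} (hy : 0 < y) : posPow a y = y ^ (a - 1) :=
  indicator_of_mem (s := Ioi (0 : ℝ)) hy _

lemma posPow_of_nonpos {a y : ℝ} (hy : y ≤ 0) : posPow a y = 0 :=
  indicator_of_notMem (s := Ioi (0 : ℝ)) (by simpa using hy) _

lemma posPow_nonneg (a y : ℝ) : 0 ≤ posPow a y :=
  indicator_nonneg (fun _ hz => rpow_nonneg (le_of_lt hz) _) y

@[fun_prop]
lemma measurable_posPow (a : ℝ) : Measurable (posPow a) :=
  (by fun_prop : Measurable fun z : ℝ => z ^ (a - 1)).indicator measurableSet_Ioi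

lemma abs_rpow_eq_posPow_add {a : ℝ} (ha : a ≠ 1) (y : ℝ) :
    |y| ^ (a - 1) = posPow a y + posPow a (-y) := by
  rcases lt_trichotomy y 0 with h | rfl | h
  · rw [posPow_of_nonpos h.le, posPow_of_pos (neg_pos.2 h), abs_of_neg h, zero_add]
  · simp [posPow_of_nonpos, zero_rpow (sub_ne_zero.2 ha)]
  · rw [posPow_of_pos h, posPow_of_nonpos (by linarith), abs_of_pos h, add_zero]

lemma leftRLIntegral_eq (μ : ℝ) (u : ℝ → ℝ) (x : ℝ) :
    leftRLIntegral μ u x = (1 / Gamma μ) * ∫ s, posPow μ (x - s) * u s := by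
  rw [leftRLIntegral, ← integral_indicator measurableSet_Iio]
  congr 2 with s
  by_cases h : s < x
  · rw [indicator_of_mem (mem_Iio.2 h), posPow_of_pos (sub_pos.2 h)]
  · rw [indicator_of_notMem (by simpa using h), posPow_of_nonpos (by linarith), zero_mul]

lemma rightRLIntegral_eq (μ : ℝ) (u : ℝ → ℝ) (x : ℝ) :
    rightRLIntegral μ u x = (1 / Gamma μ) * ∫ s, posPow μ (s - x) * u s := by
  rw [rightRLIntegral, ← integral_indicator measurableSet_Ioi]
  congr 2 with s
  by_cases h : x < s
  · rw [indicator_of_mem (mem_Ioi.2 h), posPow_of_pos (sub_pos.2 h)]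
  · rw [indicator_of_notMem (by simpa using h), posPow_of_nonpos (by linarith), zero_mul]

lemma integral_rpow_mul_sub_rpow {a b d : ℝ} (ha : 0 < a) (hb : 0 < b) (hd : 0 < d) :
    ∫ x in (0 : ℝ)..d, x ^ (a - 1) * (d - x) ^ (b - 1) =
      Gamma a * Gamma b / Gamma (a + b) * d ^ (a + b - 1) := by
  rw [← Complex.ofReal_inj, ← intervalIntegral.integral_ofReal]
  have h := Complex.betaIntegral_scaled (a : ℂ) b hd
  rw [Complex.betaIntegral_eq_Gamma_mul_div _ _ (by simpa) (by simpa)] at h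
  push_cast [Complex.ofReal_cpow hd.le, ← Complex.Gamma_ofReal]
  rw [mul_comm, ← h]
  refine intervalIntegral.integral_congr fun x hx => ?_
  rw [uIcc_of_le hd.le] at hx
  have hdx : 0 ≤ d - x := sub_nonneg.2 hx.2
  push_cast [Complex.ofReal_cpow hx.1, Complex.ofReal_cpow hdx]
  rfl

/-- The Beta integral in the form of the semigroup property of the kernels `posPow`. -/
lemma integral_posPow_mul_posPow {a b : ℝ} (ha : 0 < a) (hb : 0 < b) (s t : ℝ) :
    ∫ x, posPow a (x - s) * posPow b (t - x) =
      Gamma a * Gamma b / Gamma (a + b) * posPow (a + b) (t - s) := by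
  rw [← integral_add_right_eq_self _ s]
  rcases le_or_gt t s with h | h
  · rw [posPow_of_nonpos (sub_nonpos.2 h), mul_zero]
    refine integral_eq_zero_of_ae (.of_forall fun x => ?_)
    rcases le_or_gt x 0 with hx | hx
    · simp [posPow_of_nonpos hx]
    · simp [posPow_of_nonpos (show t - (x + s) ≤ 0 by linarith)]
  · rw [posPow_of_pos (sub_pos.2 h), ← integral_rpow_mul_sub_rpow ha hb (sub_pos.2 h),
      intervalIntegral.integral_of_le (sub_pos.2 h).le, integral_Ioc_eq_integral_Ioo,
      ← integral_indicator measurableSet_Ioo]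
    congr 1 with x
    by_cases hx : x ∈ Ioo 0 (t - s)
    · rw [indicator_of_mem hx, add_sub_cancel_right, posPow_of_pos hx.1,
        posPow_of_pos (by linarith [hx.2])]
      ring_nf
    · rw [indicator_of_notMem hx, add_sub_cancel_right]
      rcases le_or_gt x 0 with hx0 | hx0
      · rw [posPow_of_nonpos hx0, zero_mul]
      · have : t - s ≤ x := not_lt.1 fun h' => hx ⟨hx0, h'⟩
        rw [posPow_of_nonpos (y := t - (x + s)) (by linarith), mul_zero]

lemma integrable_posPow_mul_posPow {a b : ℝ} (ha : 0 < a) (hb : 0 < b) (s t : ℝ) :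
    Integrable fun x => posPow a (x - s) * posPow b (t - x) := by
  rcases le_or_gt t s with h | h
  · refine (integrable_zero ℝ ℝ volume).congr (.of_forall fun x => ?_)
    rcases le_or_gt x s with hx | hx
    · simp [posPow_of_nonpos (sub_nonpos.2 hx)]
    · simp [posPow_of_nonpos (show t - x ≤ 0 by linarith)]
  · refine .of_integral_ne_zero ?_
    have := Gamma_pos_of_pos ha
    have := Gamma_pos_of_pos hb
    have := Gamma_pos_of_pos (add_pos ha hb)
    have := rpow_pos_of_pos (sub_pos.2 h) (a + b - 1)
    rw [integral_posPow_mul_posPow ha hb, posPow_of_pos (sub_pos.2 h)]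
    positivity

lemma integrable_posPow_sub_mul {a : ℝ} (ha : 0 < a) {u : ℝ → ℝ} (hu : Continuous u)
    (hcs : HasCompactSupport u) :
    Integrable fun p : ℝ × ℝ => posPow a (p.2 - p.1) * (u p.1 * u p.2) := by
  obtain ⟨R, hR⟩ := hcs.isCompact.isBounded.subset_closedBall 0
  have hsupp : ∀ x, u x ≠ 0 → |x| ≤ R := fun x hx => by
    simpa using hR (subset_tsupport u hx)
  obtain ⟨C, hC⟩ := hu.bounded_above_of_compact_support hcs
  have hg : Integrable ((Ioc 0 (2 * R)).indicator fun y : ℝ => y ^ (a - 1)) := by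
    rw [integrable_indicator_iff measurableSet_Ioc]
    exact ((intervalIntegral.intervalIntegrable_rpow' (by linarith)).1)
  have hu1 : Integrable u := hu.integrable_of_hasCompactSupport hcs
  have h := (hu1.convolution_integrand (ContinuousLinearMap.mul ℝ ℝ) hg).swap
  refine (h.mul_bdd (g := fun p : ℝ × ℝ => u p.2) (c := C) (by fun_prop)
    (.of_forall fun p => hC _)).congr (.of_forall fun p => ?_)
  simp only [Function.comp, Prod.swap, ContinuousLinearMap.mul_apply']
  by_cases h1 : u p.1 = 0
  · simp [h1]
  by_cases h2 : u p.2 = 0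
  · simp [h2]
  have : posPow a (p.2 - p.1) = (Ioc 0 (2 * R)).indicator (fun y : ℝ => y ^ (a - 1)) (p.2 - p.1) := by
    have h3 := abs_le.1 (hsupp _ h1)
    have h4 := abs_le.1 (hsupp _ h2)
    by_cases h0 : 0 < p.2 - p.1
    · rw [posPow_of_pos h0, indicator_of_mem (mem_Ioc.2 ⟨h0, by linarith⟩)]
    · rw [posPow_of_nonpos (not_lt.1 h0), indicator_of_notMem fun h' => h0 h'.1]
  rw [this]
  ring

/-- Fractional integration by parts: the two Riemann–Liouville integrals of order `μ` pair to a
one-sided Riesz-type energy of order `2 * μ`. -/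
lemma integral_leftRLIntegral_mul_rightRLIntegral {μ : ℝ} (hμ : 0 < μ) {u : ℝ → ℝ}
    (hu : Continuous u) (hcs : HasCompactSupport u) :
    ∫ x, leftRLIntegral μ u x * rightRLIntegral μ u x =
      1 / Gamma (2 * μ) * ∫ p : ℝ × ℝ, posPow (2 * μ) (p.2 - p.1) * (u p.1 * u p.2) := by
  have hΓ := (Gamma_pos_of_pos hμ).ne'
  let F : ℝ × ℝ → ℝ → ℝ := fun p x =>
    posPow μ (x - p.1) * posPow μ (p.2 - x) * (u p.1 * u p.2)
  have hF : ∀ p, ∫ x, F p x = Gamma μ * Gamma μ / Gamma (2 * μ) *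
      (posPow (2 * μ) (p.2 - p.1) * (u p.1 * u p.2)) := fun p => by
    rw [integral_mul_const, integral_posPow_mul_posPow hμ hμ, two_mul, mul_assoc]
  have hFi : ∀ p, Integrable (F p) := fun p =>
    (integrable_posPow_mul_posPow hμ hμ p.1 p.2).mul_const (u p.1 * u p.2)
  have hnF : ∀ p, ∫ x, ‖F p x‖ = Gamma μ * Gamma μ / Gamma (2 * μ) *
      ‖posPow (2 * μ) (p.2 - p.1) * (u p.1 * u p.2)‖ := fun p => by
    simp only [F, norm_mul, norm_of_nonneg (posPow_nonneg _ _)]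
    rw [integral_mul_const, integral_posPow_mul_posPow hμ hμ, two_mul, mul_assoc]
  have hint : Integrable (Function.uncurry F) (volume.prod volume) := by
    have hm : Measurable (Function.uncurry F) := by
      have := hu.measurable
      simp only [F, Function.uncurry_def]
      fun_prop
    rw [integrable_prod_iff hm.aestronglyMeasurable]
    refine ⟨.of_forall hFi, ?_⟩
    simp only [Function.uncurry_apply_pair, hnF]
    exact (integrable_posPow_sub_mul (by positivity) hu hcs).norm.const_mul _
  have hswap := integral_integral_swap hint
  simp only [hF] at hswap
  rw [integral_const_mul] at hswap
  calc ∫ x, leftRLIntegral μ u x * rightRLIntegral μ u x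
      = ∫ x, 1 / Gamma μ * (1 / Gamma μ) * ∫ p, F p x := by
        congr 1 with x
        rw [leftRLIntegral_eq, rightRLIntegral_eq, mul_mul_mul_comm,
          ← integral_prod_mul (fun s => posPow μ (x - s) * u s) fun t => posPow μ (t - x) * u t]
        simp only [F, mul_mul_mul_comm]
        rfl
    _ = _ := by
        rw [integral_const_mul, ← hswap]
        field_simp

lemma integral_abs_sub_rpow_mul {a : ℝ} (ha0 : 0 < a) (ha : a ≠ 1) {u : ℝ → ℝ}
    (hu : Continuous u) (hcs : HasCompactSupport u) :
    Integrable (fun p : ℝ × ℝ => |p.1 - p.2| ^ (a - 1) * (u p.1 * u p.2)) ∧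
    ∫ p : ℝ × ℝ, |p.1 - p.2| ^ (a - 1) * (u p.1 * u p.2) =
      2 * ∫ p : ℝ × ℝ, posPow a (p.2 - p.1) * (u p.1 * u p.2) := by
  have h1 := integrable_posPow_sub_mul ha0 hu hcs
  have h2 : Integrable fun p : ℝ × ℝ => posPow a (p.1 - p.2) * (u p.1 * u p.2) := by
    refine h1.swap.congr (.of_forall fun p => ?_)
    simp [mul_comm (u p.1)]
  have h3 : ∫ p : ℝ × ℝ, posPow a (p.1 - p.2) * (u p.1 * u p.2) =
      ∫ p : ℝ × ℝ, posPow a (p.2 - p.1) * (u p.1 * u p.2) := by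
    refine Eq.trans ?_ (integral_prod_swap (μ := volume) (ν := volume)
      fun p : ℝ × ℝ => posPow a (p.2 - p.1) * (u p.1 * u p.2))
    refine integral_congr_ae (.of_forall fun p => ?_)
    simp [mul_comm (u p.1)]
  simp only [abs_rpow_eq_posPow_add ha, add_mul, neg_sub]
  exact ⟨h2.add h1, by rw [integral_add h2 h1, h3, two_mul]⟩

lemma integrable_exp_neg_pi_div_mul_sq {t : ℝ} (ht : 0 < t) :
    Integrable fun ξ : ℝ => rexp (-π / t * ξ ^ 2) := by
  simpa only [neg_div] using integrable_exp_neg_mul_sq (div_pos pi_pos ht)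

lemma exp_neg_pi_mul_sq_eq_integral {t : ℝ} (ht : 0 < t) (d : ℝ) :
    (rexp (-π * t * d ^ 2) : ℂ) = ∫ ξ : ℝ, ((t ^ (-(1 / 2) : ℝ) * rexp (-π / t * ξ ^ 2) : ℝ) : ℂ) *
      Complex.exp (((-2 * π * ξ * d : ℝ) : ℂ) * Complex.I) := by
  have h := congr_fun (fourier_gaussian_pi (b := ((1 / t : ℝ) : ℂ))
    (by rw [Complex.ofReal_re]; positivity)) d
  rw [Real.fourier_real_eq_integral_exp_smul] at h
  have hc : (1 / ((1 / t : ℝ) : ℂ) ^ (1 / 2 : ℂ)) * (t ^ (-(1 / 2) : ℝ) : ℝ) = 1 := by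
    rw [show (1 / 2 : ℂ) = ((1 / 2 : ℝ) : ℂ) by push_cast; rfl,
      ← Complex.ofReal_cpow (by positivity), one_div t, inv_rpow ht.le, rpow_neg ht.le]
    have := rpow_pos_of_pos ht (1 / 2)
    norm_cast
    field_simp
  calc (rexp (-π * t * d ^ 2) : ℂ)
      = (t ^ (-(1 / 2) : ℝ) : ℝ) * (1 / ((1 / t : ℝ) : ℂ) ^ (1 / 2 : ℂ) *
          Complex.exp (-π / ((1 / t : ℝ) : ℂ) * (d : ℂ) ^ 2)) := by
        rw [← mul_assoc, mul_comm ((t ^ (-(1 / 2) : ℝ) : ℝ) : ℂ), hc, one_mul]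
        push_cast
        congr 1
        field_simp
    _ = _ := by
        rw [← h, ← integral_const_mul]
        congr 1 with ξ
        push_cast
        rw [smul_eq_mul]
        have : -(π : ℂ) * (1 / t) * ξ ^ 2 = -π / t * ξ ^ 2 := by ring
        rw [this]
        ring

/-- Parseval's identity for the quadratic form with Gaussian kernel. -/
lemma integral_exp_neg_pi_mul_sq_sub_mul {t : ℝ} (ht : 0 < t) {u : ℝ → ℝ} (hu : Integrable u) :
    ∫ p : ℝ × ℝ, rexp (-π * t * (p.1 - p.2) ^ 2) * (u p.1 * u p.2) =
      ∫ ξ : ℝ, t ^ (-(1 / 2) : ℝ) * rexp (-π / t * ξ ^ 2) *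
        ‖𝓕 (fun x : ℝ => (u x : ℂ)) ξ‖ ^ 2 := by
  let e : ℝ → ℝ → ℂ := fun ξ x => Complex.exp (((-2 * π * x * ξ : ℝ) : ℂ) * Complex.I)
  let G : ℝ → ℝ := fun ξ => t ^ (-(1 / 2) : ℝ) * rexp (-π / t * ξ ^ 2)
  let H : ℝ × ℝ → ℝ → ℂ := fun p ξ => e ξ (p.1 - p.2) * ((u p.1 * u p.2 : ℝ) * (G ξ : ℂ))
  have hG : Integrable G := (integrable_exp_neg_pi_div_mul_sq ht).const_mul _
  have hint : Integrable (Function.uncurry H) (volume.prod volume) := by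
    refine ((hu.mul_prod hu).ofReal.mul_prod hG.ofReal).bdd_mul
      (f := fun q : (ℝ × ℝ) × ℝ => e q.2 (q.1.1 - q.1.2)) (c := 1) ?_ (.of_forall fun q => ?_)
    · exact Continuous.aestronglyMeasurable (by fun_prop)
    · exact (Complex.norm_exp_ofReal_mul_I _).le
  have he : ∀ ξ x y, e ξ (x - y) = e ξ x * (starRingEnd ℂ) (e ξ y) := fun ξ x y => by
    simp only [e, ← Complex.exp_conj, ← Complex.exp_add, map_mul, Complex.conj_ofReal,
      Complex.conj_I]
    congr 1
    push_cast
    ring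
  have hF : ∀ ξ, 𝓕 (fun x : ℝ => (u x : ℂ)) ξ = ∫ x, e ξ x * u x := fun ξ => by
    rw [Real.fourier_real_eq_integral_exp_smul]
    rfl
  have h1 : ∀ p, ∫ ξ, H p ξ = ((rexp (-π * t * (p.1 - p.2) ^ 2) * (u p.1 * u p.2) : ℝ) : ℂ) := by
    intro p
    rw [Complex.ofReal_mul, exp_neg_pi_mul_sq_eq_integral ht, ← integral_mul_const]
    congr 1 with ξ
    simp only [H, G, e]
    rw [mul_right_comm (-2 * π)]
    ring
  have h2 : ∀ ξ, ∫ p, H p ξ = ((G ξ * ‖𝓕 (fun x : ℝ => (u x : ℂ)) ξ‖ ^ 2 : ℝ) : ℂ) := by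
    intro ξ
    rw [Complex.ofReal_mul, Complex.ofReal_pow, ← Complex.mul_conj', hF, ← integral_conj,
      ← integral_prod_mul (fun x => e ξ x * (u x : ℂ))
        fun y => (starRingEnd ℂ) (e ξ y * (u y : ℂ)), ← integral_const_mul]
    refine integral_congr_ae (.of_forall fun p => ?_)
    simp only [H, he, map_mul, Complex.conj_ofReal, Complex.ofReal_mul]
    ring
  rw [← Complex.ofReal_inj, ← integral_complex_ofReal, ← integral_complex_ofReal]
  exact (integral_congr_ae (.of_forall fun p => (h1 p).symm)).trans
    ((integral_integral_swap hint).trans (integral_congr_ae (.of_forall h2)))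

lemma integral_rpow_mul_exp_neg_div {a r : ℝ} (ha : 0 < a) (hr : 0 < r) :
    ∫ t in Ioi (0 : ℝ), t ^ (-a - 1) * rexp (-(r / t)) = (1 / r) ^ a * Gamma a := by
  rw [← integral_rpow_mul_exp_neg_mul_Ioi ha hr,
    ← integral_comp_rpow_Ioi _ (neg_ne_zero.2 one_ne_zero)]
  refine setIntegral_congr_fun measurableSet_Ioi fun t (ht : 0 < t) => ?_
  simp only [smul_eq_mul, abs_neg, abs_one, one_mul]
  rw [← rpow_mul ht.le, ← mul_assoc, ← rpow_add ht, rpow_neg_one, div_eq_mul_inv, inv_inv]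
  ring_nf

/-- The Fourier-side evaluation of the Riesz energy of order `a ∈ (0, 1)`. -/
lemma integral_abs_sub_rpow_mul_eq_fourier {a : ℝ} (ha0 : 0 < a) (ha1 : a < 1) {u : ℝ → ℝ}
    (hu : Continuous u) (hcs : HasCompactSupport u) :
    (1 / π) ^ ((1 - a) / 2) * Gamma ((1 - a) / 2) *
        ∫ p : ℝ × ℝ, |p.1 - p.2| ^ (a - 1) * (u p.1 * u p.2) =
      (1 / π) ^ (a / 2) * Gamma (a / 2) *
        ∫ ξ : ℝ, |ξ| ^ (-a) * ‖𝓕 (fun x : ℝ => (u x : ℂ)) ξ‖ ^ 2 := by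
  set v := 𝓕 (fun x : ℝ => (u x : ℂ))
  set b := (1 - a) / 2 with hb
  have hb0 : 0 < b := by rw [hb]; linarith
  have hui : Integrable u := hu.integrable_of_hasCompactSupport hcs
  have hvc : Continuous v := VectorFourier.fourierIntegral_continuous continuous_fourierChar
    continuous_inner hui.ofReal
  have hvb : ∀ ξ, ‖v ξ‖ ≤ ∫ x, ‖(u x : ℂ)‖ := fun ξ =>
    VectorFourier.norm_fourierIntegral_le_integral_norm _ _ _ _ _
  let ν : Measure ℝ := volume.restrict (Ioi 0)
  let K : ℝ × ℝ → ℝ → ℝ := fun p t =>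
    t ^ (b - 1) * rexp (-(π * (p.1 - p.2) ^ 2 * t)) * (u p.1 * u p.2)
  let L : ℝ → ℝ → ℝ := fun ξ t =>
    t ^ (-(a / 2) - 1) * rexp (-(π * ξ ^ 2 / t)) * ‖v ξ‖ ^ 2
  have hdiag : ∀ᵐ p : ℝ × ℝ, p.1 - p.2 ≠ 0 :=
    (quasiMeasurePreserving_sub volume volume).ae (Measure.ae_ne volume 0)
  have hpow : ∀ {c d : ℝ}, d ≠ 0 → (1 / (π * d ^ 2)) ^ c = (1 / π) ^ c * |d| ^ (-(2 * c)) := by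
    intro c d hd
    rw [one_div, mul_inv, mul_rpow (by positivity) (by positivity), one_div, ← sq_abs,
      
      inv_rpow (sq_nonneg |d|), inv_rpow (by positivity), ← rpow_natCast, ← rpow_mul (by positivity),
      Nat.cast_ofNat, rpow_neg (abs_nonneg d)]
  have hgint : ∀ {d : ℝ}, d ≠ 0 → Integrable (fun t => t ^ (b - 1) * rexp (-(π * d ^ 2 * t))) ν := by
    intro d hd
    have := Gamma_pos_of_pos hb0
    have : 0 < π * d ^ 2 := by positivity
    refine .of_integral_ne_zero ?_
    rw [integral_rpow_mul_exp_neg_mul_Ioi hb0 this]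
    positivity
  have hgval : ∀ {d : ℝ}, d ≠ 0 → ∫ t, t ^ (b - 1) * rexp (-(π * d ^ 2 * t)) ∂ν =
      (1 / π) ^ b * Gamma b * |d| ^ (a - 1) := by
    intro d hd
    rw [integral_rpow_mul_exp_neg_mul_Ioi hb0 (by positivity), hpow hd, mul_right_comm]
    congr 2
    rw [hb]
    ring
  have hK : Integrable (Function.uncurry K) (volume.prod ν) := by
    have hm : Measurable (Function.uncurry K) := by
      have := hu.measurable
      simp only [K, Function.uncurry_def]
      fun_prop
    rw [integrable_prod_iff hm.aestronglyMeasurable]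
    refine ⟨?_, ((integral_abs_sub_rpow_mul ha0 ha1.ne hu hcs).1.norm.const_mul
      ((1 / π) ^ b * Gamma b)).congr ?_⟩
    · filter_upwards [hdiag] with p hp
      exact (hgint hp).mul_const (u p.1 * u p.2)
    · filter_upwards [hdiag] with p hp
      have : ∀ᵐ t ∂ν, ‖K p t‖ =
          t ^ (b - 1) * rexp (-(π * (p.1 - p.2) ^ 2 * t)) * ‖u p.1 * u p.2‖ := by
        filter_upwards [ae_restrict_mem measurableSet_Ioi] with t (ht : 0 < t)
        rw [norm_mul, norm_of_nonneg (by positivity)]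
      simp only [Function.uncurry_apply_pair]
      rw [integral_congr_ae this, integral_mul_const, hgval hp, norm_mul,
        norm_of_nonneg (by positivity)]
      ring
  have hKL : ∀ᵐ t ∂ν, ∫ p, K p t = ∫ ξ, L ξ t := by
    filter_upwards [ae_restrict_mem measurableSet_Ioi] with t (ht : 0 < t)
    have h := congr_arg (t ^ (b - 1) * ·) (integral_exp_neg_pi_mul_sq_sub_mul ht hui)
    simp only [← integral_const_mul] at h
    refine (integral_congr_ae (.of_forall fun p => ?_)).trans
      (h.trans (integral_congr_ae (.of_forall fun ξ => ?_)))
    · simp only [K, ← mul_assoc]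
      congr 4
      ring
    · simp only [L, ← mul_assoc]
      rw [← rpow_add ht]
      congr 3
      · rw [hb]; ring
      · ring
  have hL : Integrable (Function.uncurry L) (volume.prod ν) := by
    have hm : Measurable (Function.uncurry L) := by
      have := hvc.measurable
      simp only [L, Function.uncurry_def]
      fun_prop
    have hL0 : ∀ᵐ t ∂ν, ∀ ξ, 0 ≤ L ξ t := by
      filter_upwards [ae_restrict_mem measurableSet_Ioi] with t (ht : 0 < t) ξ
      positivity
    rw [integrable_prod_iff' hm.aestronglyMeasurable]
    refine ⟨?_, hK.integral_prod_right.congr ?_⟩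
    · filter_upwards [ae_restrict_mem measurableSet_Ioi] with t (ht : 0 < t)
      refine ((integrable_exp_neg_pi_div_mul_sq ht).const_mul (t ^ (-(a / 2) - 1))).mul_bdd
        (c := (∫ x, ‖(u x : ℂ)‖) ^ 2) (g := fun ξ => ‖v ξ‖ ^ 2) (by fun_prop)
        (.of_forall fun ξ => ?_) |>.congr (.of_forall fun ξ => ?_)
      · rw [norm_of_nonneg (by positivity)]
        gcongr
        exact hvb ξ
      · simp only [L, Function.uncurry_apply_pair]
        congr 3
        ring
    · filter_upwards [hKL, hL0] with t ht ht0
      exact ht.trans (integral_congr_ae (.of_forall fun ξ => (norm_of_nonneg (ht0 ξ)).symm))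
  have hKval : ∫ p, ∫ t, K p t ∂ν = (1 / π) ^ b * Gamma b *
      ∫ p : ℝ × ℝ, |p.1 - p.2| ^ (a - 1) * (u p.1 * u p.2) := by
    rw [← integral_const_mul]
    refine integral_congr_ae ?_
    filter_upwards [hdiag] with p hp
    rw [integral_mul_const, hgval hp, mul_assoc]
  have hLval : ∫ ξ, ∫ t, L ξ t ∂ν = (1 / π) ^ (a / 2) * Gamma (a / 2) *
      ∫ ξ : ℝ, |ξ| ^ (-a) * ‖v ξ‖ ^ 2 := by
    rw [← integral_const_mul]
    refine integral_congr_ae ?_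
    filter_upwards [Measure.ae_ne volume 0] with ξ hξ
    rw [integral_mul_const, integral_rpow_mul_exp_neg_div (by positivity) (by positivity), hpow hξ]
    ring_nf
  rw [← hKval, ← hLval, integral_integral_swap hK, integral_integral_swap hL]
  exact integral_congr_ae hKL

lemma rieszConstant_eq_cos_mul {μ : ℝ} (hμ0 : 0 < μ) (hμ : μ < 1 / 2) :
    (1 / π) ^ μ * Gamma μ * (2 * π) ^ (2 * μ) =
      2 * cos (μ * π) * Gamma (2 * μ) * ((1 / π) ^ ((1 - 2 * μ) / 2) * Gamma ((1 - 2 * μ) / 2)) := by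
  have h1 := Gamma_mul_Gamma_add_half μ
  have h2 := Gamma_mul_Gamma_one_sub (μ + 1 / 2)
  have hcos : sin (π * (μ + 1 / 2)) = cos (μ * π) := by
    rw [← sin_add_pi_div_two]; ring_nf
  have hc : 0 < cos (μ * π) := cos_pos_of_mem_Ioo ⟨by nlinarith [pi_pos], by nlinarith [pi_pos]⟩
  have hG := Gamma_pos_of_pos (show 0 < μ + 1 / 2 by linarith)
  rw [hcos, show 1 - (μ + 1 / 2) = (1 - 2 * μ) / 2 by ring, eq_div_iff hc.ne'] at h2
  rw [rpow_sub two_pos, rpow_one] at h1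
  have hpi : (1 / π) ^ ((1 - 2 * μ) / 2) * √π = π ^ μ := by
    rw [one_div, inv_rpow pi_pos.le, ← rpow_neg pi_pos.le, sqrt_eq_rpow, ← rpow_add pi_pos]
    ring_nf
  have hpi2 : (1 / π) ^ μ * (2 * π) ^ (2 * μ) = 2 ^ (2 * μ) * π ^ μ := by
    rw [mul_rpow two_pos.le pi_pos.le, one_div, inv_rpow pi_pos.le, two_mul μ, rpow_add pi_pos]
    have := rpow_pos_of_pos pi_pos μ
    field_simp
  refine mul_right_cancel₀ hG.ne' ?_
  calc (1 / π) ^ μ * Gamma μ * (2 * π) ^ (2 * μ) * Gamma (μ + 1 / 2)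
      = (1 / π) ^ μ * (2 * π) ^ (2 * μ) * (Gamma μ * Gamma (μ + 1 / 2)) := by ring
    _ = 2 * Gamma (2 * μ) * ((1 / π) ^ ((1 - 2 * μ) / 2) * √π) * √π := by
        rw [hpi2, h1, hpi]
        field_simp
    _ = 2 * Gamma (2 * μ) * (1 / π) ^ ((1 - 2 * μ) / 2) *
          (Gamma (μ + 1 / 2) * Gamma ((1 - 2 * μ) / 2) * cos (μ * π)) := by
        rw [h2]
        linear_combination 2 * Gamma (2 * μ) * (1 / π) ^ ((1 - 2 * μ) / 2) *
          mul_self_sqrt pi_pos.le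
    _ = _ := by ring

theorem stmt17 (μ : ℝ) (hμ0 : 0 < μ) (hμ : μ < 1 / 2) (u : ℝ → ℝ)
    (hu : ContDiff ℝ (⊤ : ℕ∞) u) (hcs : HasCompactSupport u) :
    ∫ x : ℝ, leftRLIntegral μ u x * rightRLIntegral μ u x =
      Real.cos (μ * Real.pi) *
        ∫ ξ : ℝ, |2 * Real.pi * ξ| ^ (-(2 * μ)) * ‖𝓕 (fun x : ℝ => (u x : ℂ)) ξ‖ ^ 2 := by
  have hcont := hu.continuous
  set v := 𝓕 (fun x : ℝ => (u x : ℂ))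
  have hkey := integral_abs_sub_rpow_mul_eq_fourier (a := 2 * μ) (by linarith) (by linarith)
    hcont hcs
  rw [(integral_abs_sub_rpow_mul (by linarith) (by linarith) hcont hcs).2,
    mul_div_cancel_left₀ μ two_ne_zero] at hkey
  have hpow : ∫ ξ : ℝ, |2 * π * ξ| ^ (-(2 * μ)) * ‖v ξ‖ ^ 2 =
      ((2 * π) ^ (2 * μ))⁻¹ * ∫ ξ : ℝ, |ξ| ^ (-(2 * μ)) * ‖v ξ‖ ^ 2 := by
    rw [← integral_const_mul]
    congr 1 with ξ
    rw [abs_mul, abs_of_pos two_pi_pos, mul_rpow two_pi_pos.le (abs_nonneg ξ),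
      rpow_neg two_pi_pos.le, mul_assoc]
  rw [integral_leftRLIntegral_mul_rightRLIntegral hμ0 hcont hcs, hpow]
  have hconst := rieszConstant_eq_cos_mul hμ0 hμ
  have hC := mul_pos (rpow_pos_of_pos (one_div_pos.2 pi_pos) ((1 - 2 * μ) / 2))
    (Gamma_pos_of_pos (show 0 < (1 - 2 * μ) / 2 by linarith))
  have hΓ := Gamma_pos_of_pos (show 0 < 2 * μ by linarith)
  have h2π := rpow_pos_of_pos two_pi_pos (2 * μ)
  set C := (1 / π) ^ ((1 - 2 * μ) / 2) * Gamma ((1 - 2 * μ) / 2)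
  set E := ∫ p : ℝ × ℝ, posPow (2 * μ) (p.2 - p.1) * (u p.1 * u p.2)
  set S := ∫ ξ : ℝ, |ξ| ^ (-(2 * μ)) * ‖v ξ‖ ^ 2
  have h : E * (2 * π) ^ (2 * μ) = cos (μ * π) * Gamma (2 * μ) * S :=
    mul_left_cancel₀ (mul_pos two_pos hC).ne' <| by
      linear_combination (2 * π) ^ (2 * μ) * hkey + S * hconst
  field_simp
  linear_combination h
end
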